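/- arXiv:2206.05482 — 2 statements merged into one kernel-verified Lean document; each statement's English description precedes it below -/
import Mathlib

section
/- Let Â = A + εB be an n×n dual matrix and let X be the Moore–Penrose inverse of A (i.e. AXA = A, XAX = X, (AX)^T = AX, (XA)^T = XA). Then Â has dual index one if and only if rank(A²) = rank(A) and (Iₙ − AX)·B·(Iₙ − XA) = 0. -/
open Matrix

/-- The dual matrix `A + εB`, viewed as a matrix over the dual numbers `ℝ[ε]`. -/
def dm {n : ℕ} (A B : Matrix (Fin n) (Fin n) ℝ) :
    Matrix (Fin n) (Fin n) (DualNumber ℝ) :=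
  fun i j => TrivSqZeroExt.inl (A i j) + TrivSqZeroExt.inr (B i j)

/-- A dual matrix has dual index one iff its column space equals that of its square,
equivalently (as shown in the paper) there is a dual matrix `X` with `M² * X = M`. -/
def DualIndexOne {n : ℕ} (M : Matrix (Fin n) (Fin n) (DualNumber ℝ)) : Prop :=
  ∃ X : Matrix (Fin n) (Fin n) (DualNumber ℝ), M * M * X = M

/-- `G` is a group inverse of the real matrix `A`. -/
def IsGroupInv {n : ℕ} (A G : Matrix (Fin n) (Fin n) ℝ) : Prop :=
  A * G * A = A ∧ G * A * G = G ∧ A * G = G * A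

/-- `X` is the Moore–Penrose inverse of the real matrix `A`. -/
def IsMoorePenrose {n : ℕ} (A X : Matrix (Fin n) (Fin n) ℝ) : Prop :=
  A * X * A = A ∧ X * A * X = X ∧ (A * X)ᵀ = A * X ∧ (X * A)ᵀ = X * A

/-- `C` is a core inverse of the real matrix `A`. -/
def IsCoreInv {n : ℕ} (A C : Matrix (Fin n) (Fin n) ℝ) : Prop :=
  A * C * A = A ∧ A * (C * C) = C ∧ (A * C)ᵀ = A * C

/-- `G` is a dual group generalized inverse (DGGI) of the dual matrix `M`. -/
def IsDGGI {n : ℕ} (M G : Matrix (Fin n) (Fin n) (DualNumber ℝ)) : Prop :=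
  M * G * M = M ∧ G * M * G = G ∧ M * G = G * M

/-- `X` is a dual Moore–Penrose generalized inverse (DMPGI) of the dual matrix `M`. -/
def IsDMPGI {n : ℕ} (M X : Matrix (Fin n) (Fin n) (DualNumber ℝ)) : Prop :=
  M * X * M = M ∧ X * M * X = X ∧ (M * X)ᵀ = M * X ∧ (X * M)ᵀ = X * M

/-- `G` is a dual core generalized inverse (DCGI) of the dual matrix `M`. -/
def IsDCGI {n : ℕ} (M G : Matrix (Fin n) (Fin n) (DualNumber ℝ)) : Prop :=
  M * G * M = M ∧ M * (G * G) = G ∧ (M * G)ᵀ = M * G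


lemma aux_right {n : ℕ} (A : Matrix (Fin n) (Fin n) ℝ) (h : (A * A).rank = A.rank) :
    ∃ P : Matrix (Fin n) (Fin n) ℝ, A * A * P = A := by
  have hle : LinearMap.range (A * A).mulVecLin ≤ LinearMap.range A.mulVecLin := by
    rw [Matrix.mulVecLin_mul]
    exact LinearMap.range_comp_le_range _ _
  have heq := Submodule.eq_of_le_of_finrank_eq hle h
  have key : ∀ j, ∃ v : Fin n → ℝ, (A * A) *ᵥ v = A.col j := by
    intro j
    have : A.col j ∈ LinearMap.range (A * A).mulVecLin := by
      rw [heq]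
      exact ⟨Pi.single j 1, by simp⟩
    obtain ⟨v, hv⟩ := this
    exact ⟨v, by simpa using hv⟩
  choose v hv using key
  refine ⟨(Matrix.of v)ᵀ, ?_⟩
  ext i j
  exact congrFun (hv j) i

lemma aux_left {n : ℕ} (A : Matrix (Fin n) (Fin n) ℝ) (h : (A * A).rank = A.rank) :
    ∃ P : Matrix (Fin n) (Fin n) ℝ, P * (A * A) = A := by
  obtain ⟨P, hP⟩ := aux_right Aᵀ (by
    rw [← Matrix.transpose_mul, Matrix.rank_transpose, Matrix.rank_transpose, h])
  refine ⟨Pᵀ, ?_⟩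
  have := congrArg Matrix.transpose hP
  simpa [Matrix.transpose_mul] using this

lemma dm_mul {n : ℕ} (A B C D : Matrix (Fin n) (Fin n) ℝ) :
    dm A B * dm C D = dm (A * C) (A * D + B * C) := by
  ext i j
  · simp [dm, Matrix.mul_apply, TrivSqZeroExt.fst_sum]
  · simp [dm, Matrix.mul_apply, TrivSqZeroExt.snd_sum, Finset.sum_add_distrib, mul_comm]

lemma dm_inj {n : ℕ} {A B C D : Matrix (Fin n) (Fin n) ℝ} (h : dm A B = dm C D) :
    A = C ∧ B = D := by
  constructor <;> ext i j
  · simpa [dm] using congrArg TrivSqZeroExt.fst (congrFun (congrFun h i) j)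
  · simpa [dm] using congrArg TrivSqZeroExt.snd (congrFun (congrFun h i) j)

lemma dm_surj {n : ℕ} (M : Matrix (Fin n) (Fin n) (DualNumber ℝ)) :
    ∃ A B, M = dm A B :=
  ⟨fun i j => (M i j).fst, fun i j => (M i j).snd, by
    ext i j <;> simp [dm]⟩

theorem stmt2 {n : ℕ} (A B X : Matrix (Fin n) (Fin n) ℝ)
    (hX : IsMoorePenrose A X) :
    DualIndexOne (dm A B) ↔
      (A * A).rank = A.rank ∧ (1 - A * X) * B * (1 - X * A) = 0 := by
  obtain ⟨h1, -, -, -⟩ := hX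
  have hL : (1 - A * X) * A = 0 := by rw [sub_mul, one_mul, h1, sub_self]
  have hR : A * (1 - X * A) = 0 := by rw [mul_sub, mul_one, ← mul_assoc, h1, sub_self]
  constructor
  · rintro ⟨Y, hY⟩
    obtain ⟨P, Q, rfl⟩ := dm_surj Y
    rw [dm_mul, dm_mul] at hY
    obtain ⟨hP, hQ⟩ := dm_inj hY
    have hr : (A * A).rank = A.rank := by
      apply le_antisymm (Matrix.rank_mul_le_left A A)
      conv_lhs => rw [← hP]
      exact Matrix.rank_mul_le_left _ _
    refine ⟨hr, ?_⟩
    obtain ⟨P', hP'⟩ := aux_left A hr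
    have e : A * (P * (1 - X * A)) = 0 := by
      calc A * (P * (1 - X * A)) = P' * (A * A) * (P * (1 - X * A)) := by rw [hP']
        _ = P' * ((A * A * P) * (1 - X * A)) := by simp only [mul_assoc]
        _ = 0 := by rw [hP, hR, mul_zero]
    calc (1 - A * X) * B * (1 - X * A)
        = (1 - A * X) * (A * A * Q + (A * B + B * A) * P) * (1 - X * A) := by rw [hQ]
      _ = ((1 - A * X) * A) * (A * Q + B * P) * (1 - X * A)
          + (1 - A * X) * B * (A * (P * (1 - X * A))) := by noncomm_ring
      _ = 0 := by rw [hL, e]; simp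
  · rintro ⟨hr, hB⟩
    obtain ⟨P, hP⟩ := aux_right A hr
    set R := B - (A * B + B * A) * P with hRdef
    have hB' : (1 - A * X) * B = (1 - A * X) * B * (X * A) := by
      rw [mul_sub, mul_one, sub_eq_zero] at hB
      exact hB
    have e : (1 - A * X) * R = 0 := by
      calc (1 - A * X) * R = (1 - A * X) * B - ((1 - A * X) * A) * (B * P)
            - ((1 - A * X) * B) * (A * P) := by rw [hRdef]; noncomm_ring
        _ = (1 - A * X) * B * (X * A) - (1 - A * X) * B * (X * A) * (A * P) := by
            rw [hL, ← hB']; simp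
        _ = (1 - A * X) * B * X * (A - A * A * P) := by
            simp only [mul_sub, mul_assoc]
        _ = 0 := by rw [hP, sub_self, mul_zero]
    have e2 : A * X * R = R := by
      rw [sub_mul, one_mul, sub_eq_zero] at e
      exact e.symm
    refine ⟨dm P (P * X * R), ?_⟩
    rw [dm_mul, dm_mul, hP]
    have : A * A * (P * X * R) = R := by
      calc A * A * (P * X * R) = (A * A * P) * X * R := by simp only [mul_assoc]
        _ = R := by rw [hP, e2]
    rw [this, hRdef, sub_add_cancel]
end

section
/- Let Â = A + εB be an n×n dual matrix. Then Â has a dual core generalized inverse (a dual matrix Ĝ with ÂĜÂ = Â, ÂĜ² = Ĝ, (ÂĜ)^T = ÂĜ) if and only if Â has dual index one. -/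
open Matrix

theorem aux_unit {n : ℕ} (D : Matrix (Fin n) (Fin n) (DualNumber ℝ)) :
    IsUnit (1 + Dᵀ * D) := by
  rw [Matrix.isUnit_iff_isUnit_det, TrivSqZeroExt.isUnit_iff_isUnit_fst]
  let φ : DualNumber ℝ →+* ℝ := (TrivSqZeroExt.fstHom ℝ ℝ ℝ).toRingHom
  have h1 : TrivSqZeroExt.fst (1 + Dᵀ * D).det = φ (1 + Dᵀ * D).det := rfl
  rw [h1, RingHom.map_det, map_add, map_one, map_mul]
  have h2 : φ.mapMatrix Dᵀ = (φ.mapMatrix D)ᴴ := by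
    ext i j
    simp
  rw [h2]
  have h3 : (1 + (φ.mapMatrix D)ᴴ * (φ.mapMatrix D)).PosDef :=
    Matrix.PosDef.one.add_posSemidef (Matrix.posSemidef_conjTranspose_mul_self _)
  exact (Matrix.isUnit_iff_isUnit_det _).1 h3.isUnit

theorem aux_inj {n : ℕ} (M X Z : Matrix (Fin n) (Fin n) (DualNumber ℝ))
    (h : M * M * X = M) (hZ : M * M * Z = 0) : M * Z = 0 := by
  have hf : Module.Finite ℝ (DualNumber ℝ) := inferInstanceAs (Module.Finite ℝ (ℝ × ℝ))
  have hN : IsNoetherian ℝ (Matrix (Fin n) (Fin n) (DualNumber ℝ)) := inferInstance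
  have hp : ∀ k : ℕ, M ^ k * (M * X ^ k) = M := by
    intro k
    induction k with
    | zero => simp
    | succ k ih =>
      calc M ^ (k+1) * (M * X ^ (k+1)) = M ^ k * ((M * M * X) * X ^ k) := by
            rw [pow_succ, pow_succ']; simp only [mul_assoc]
        _ = M := by rw [h, ih]
  obtain ⟨k, hk⟩ := Filter.eventually_atTop.1
    (Module.End.eventually_disjoint_ker_pow_range_pow (LinearMap.mulLeft ℝ M))
  have hd := hk (k+1) (by omega)
  rw [LinearMap.pow_mulLeft] at hd
  refine Submodule.disjoint_def.1 hd (M * Z) ?_ ?_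
  · rw [LinearMap.mem_ker, LinearMap.mulLeft_apply, pow_succ, mul_assoc, ← mul_assoc M M Z, hZ,
      mul_zero]
  · refine ⟨M * X ^ (k+1) * Z, ?_⟩
    rw [LinearMap.mulLeft_apply, ← mul_assoc, hp]

theorem aux_proj {n : ℕ} (P : Matrix (Fin n) (Fin n) (DualNumber ℝ)) (hP : P * P = P) :
    ∃ W, (P * W) * P = P ∧ (P * W)ᵀ = P * W := by
  obtain ⟨u, hu⟩ := aux_unit (P - Pᵀ)
  have hT : Pᵀ * Pᵀ = Pᵀ := by rw [← Matrix.transpose_mul, hP]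
  set T := Pᵀ with hTd
  have hTT : Tᵀ = P := by simp [hTd]
  have hP' : ∀ Y, P * (P * Y) = P * Y := fun Y => by rw [← mul_assoc, hP]
  have hT' : ∀ Y, T * (T * Y) = T * Y := fun Y => by rw [← mul_assoc, hT]
  have hz : (u : Matrix (Fin n) (Fin n) (DualNumber ℝ)) = 1 - P - T + P * T + T * P := by
    rw [hu, Matrix.transpose_sub, hTT, ← hTd]
    simp only [mul_sub, sub_mul, hP, hT]
    abel
  have e1 : (u : Matrix (Fin n) (Fin n) (DualNumber ℝ)) * P = P * T * P := by
    rw [hz]; simp only [mul_sub, sub_mul, mul_add, add_mul, mul_assoc, hP, hP', hT, hT', one_mul]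
    abel
  have e2 : P * (u : Matrix (Fin n) (Fin n) (DualNumber ℝ)) = P * T * P := by
    rw [hz]; simp only [mul_sub, sub_mul, mul_add, add_mul, mul_assoc, hP, hP', hT, hT', mul_one]
    abel
  have e3 : (u : Matrix (Fin n) (Fin n) (DualNumber ℝ)) * T = T * P * T := by
    rw [hz]; simp only [mul_sub, sub_mul, mul_add, add_mul, mul_assoc, hP, hP', hT, hT', one_mul]
    abel
  have e4 : T * (u : Matrix (Fin n) (Fin n) (DualNumber ℝ)) = T * P * T := by
    rw [hz]; simp only [mul_sub, sub_mul, mul_add, add_mul, mul_assoc, hP, hP', hT, hT', mul_one]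
    abel
  have hut : (u : Matrix (Fin n) (Fin n) (DualNumber ℝ))ᵀ = u := by
    rw [hu]; simp [Matrix.transpose_mul]
  have c1 : Commute (↑u⁻¹ : Matrix (Fin n) (Fin n) (DualNumber ℝ)) P :=
    Commute.units_inv_left (show Commute _ _ from e1.trans e2.symm)
  have c2 : Commute (↑u⁻¹ : Matrix (Fin n) (Fin n) (DualNumber ℝ)) T :=
    Commute.units_inv_left (show Commute _ _ from e3.trans e4.symm)
  set v : Matrix (Fin n) (Fin n) (DualNumber ℝ) := ↑u⁻¹ with hv
  have huv : (u : Matrix (Fin n) (Fin n) (DualNumber ℝ)) * v = 1 := u.mul_inv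
  have hvu : v * (u : Matrix (Fin n) (Fin n) (DualNumber ℝ)) = 1 := u.inv_mul
  have hvt : vᵀ = v := by
    have h := congrArg Matrix.transpose huv
    rw [Matrix.transpose_mul, hut, Matrix.transpose_one] at h
    exact left_inv_eq_right_inv h huv
  refine ⟨T * v, ?_, ?_⟩
  · calc P * (T * v) * P = P * T * (v * P) := by simp only [mul_assoc]
      _ = (P * T * P) * v := by rw [c1.eq]; simp only [mul_assoc]
      _ = P := by rw [← e2, mul_assoc, huv, mul_one]
  · rw [Matrix.transpose_mul, Matrix.transpose_mul, hvt, hTT, ← hTd, ← c2.eq, ← mul_assoc P,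
      c1.eq]

theorem stmt9 {n : ℕ} (A B : Matrix (Fin n) (Fin n) ℝ) :
    (∃ G : Matrix (Fin n) (Fin n) (DualNumber ℝ), IsDCGI (dm A B) G) ↔
      DualIndexOne (dm A B) := by
  generalize dm A B = M
  constructor
  · rintro ⟨G, h1, h2, -⟩
    refine ⟨G * G * M, ?_⟩
    calc M * M * (G * G * M) = M * (M * (G * G)) * M := by simp only [mul_assoc]
      _ = M := by rw [h2, h1]
  · rintro ⟨X, h⟩
    have h0 : M * (X * M - M * X) = 0 := by
      apply aux_inj M X _ h
      rw [mul_sub, ← mul_assoc, h, sub_eq_zero]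
      calc M * M = M * (M * M * X) := by rw [h]
        _ = _ := by simp only [mul_assoc]
    have hM : M * X * M = M := by
      rw [mul_sub, sub_eq_zero, ← mul_assoc, ← mul_assoc, h] at h0
      exact h0
    obtain ⟨W, w1, w2⟩ := aux_proj (M * X) (by rw [← mul_assoc, hM])
    set Q := M * X * W with hQ
    have hQM : Q * M = M := by
      calc Q * M = Q * (M * X) * M := by rw [mul_assoc Q, hM]
        _ = M := by rw [w1, hM]
    have hPQ : M * X * Q = Q := by
      rw [hQ, ← mul_assoc, ← mul_assoc, hM]
    have hMC : M * (M * X * X * Q) = Q := by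
      calc M * (M * X * X * Q) = M * M * X * X * Q := by simp only [mul_assoc]
        _ = Q := by rw [h, hPQ]
    refine ⟨M * X * X * Q, ?_, ?_, ?_⟩
    · rw [hMC, hQM]
    · rw [← mul_assoc M (M * X * X * Q), hMC]
      simp only [← mul_assoc]
      rw [hQM]
    · rw [hMC, w2]
end
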